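/- Let Λ = (λ_k)_{k∈ℕ} be a strictly increasing sequence of positive real numbers satisfying the gap condition and the Müntz condition, and let 1 ≤ p < ∞. Then for each 0 < δ < 1 the Müntz spaces M_{Λ,p}([0,1]) and M_{Λ,p}([δ,1]) are linearly topologically isomorphic; the isomorphism is induced by restriction of Müntz polynomials from [0,1] to [δ,1]. -/

import Mathlib

open MeasureTheory Filter
open scoped ENNReal NNReal Topology

/-- The Müntz space `M_{S,p}([a,b])`: the closure in `L_p([a,b],ℝ)` of the linear span of
the monomials `t ↦ t ^ λ`, `λ ∈ S`. -/
noncomputable def muntzSpace (S : Set ℝ) (p : ℝ≥0∞) [Fact (1 ≤ p)] (a b : ℝ) :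
    Submodule ℝ (Lp ℝ p (volume.restrict (Set.Icc a b))) :=
  (Submodule.span ℝ {g : Lp ℝ p (volume.restrict (Set.Icc a b)) |
    ∃ lam ∈ S, (g : ℝ → ℝ) =ᵐ[volume.restrict (Set.Icc a b)] fun t => t ^ lam}).topologicalClosure

/-! For positive exponents, the quadratic form of the Cauchy matrix does not increase when the
coefficients are multiplied by the values of a Blaschke factor. A Blaschke product that vanishes at
all exponents but one thus isolates a single coefficient, and the gap and Müntz conditions bound the
inverse of that product by `C * exp (ε * Λ k)`. Hence the coefficients of Müntz polynomials in the
unit ball of `L¹([0,1])` grow subexponentially, uniformly over the ball.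

If restriction to `[δ,1]` were not bounded below on Müntz polynomials, there would be polynomials of
norm `1` on `[0,1]` whose norms on `[δ,1]` tend to `0`. By the coefficient bound, a subsequence
converges, uniformly on compact subsets of `[0,1)`, to a Müntz series that is analytic on `(0,1)`
and vanishes on `(δ,1)`, hence vanishes identically. Then the norms on `[0,1]` tend to `0` along the
subsequence, a contradiction. So restriction extends to an isomorphism of the closures. -/

/-- The quadratic form of the Cauchy matrix `(1 / (μ i + μ j))`. For positive `μ` it is the squared
`L²(0, ∞)`-norm of `u ↦ ∑ i ∈ s, b i * exp (-μ i * u)`. -/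
noncomputable def cauchyForm {ι : Type*} (s : Finset ι) (μ b : ι → ℝ) : ℝ :=
  ∑ i ∈ s, ∑ j ∈ s, b i * b j / (μ i + μ j)

section CauchyForm

variable {ι : Type*} {s : Finset ι} {μ : ι → ℝ}

lemma cauchyForm_sub_cauchyForm_blaschke (hμ : ∀ i ∈ s, 0 < μ i) {m : ℝ} (hm : 0 < m)
    (b : ι → ℝ) :
    cauchyForm s μ b - cauchyForm s μ (fun i => b i * ((μ i - m) / (μ i + m))) =
      2 * m * (∑ i ∈ s, b i / (μ i + m)) ^ 2 := by
  simp only [cauchyForm]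
  rw [sq, Finset.sum_mul_sum, Finset.mul_sum, ← Finset.sum_sub_distrib]
  refine Finset.sum_congr rfl fun i hi => ?_
  rw [Finset.mul_sum, ← Finset.sum_sub_distrib]
  refine Finset.sum_congr rfl fun j hj => ?_
  have := hμ i hi
  have := hμ j hj
  field_simp
  ring

lemma cauchyForm_prod_blaschke_le {κ : Type*} (hμ : ∀ i ∈ s, 0 < μ i) {t : Finset κ} {m : κ → ℝ}
    (hm : ∀ j ∈ t, 0 < m j) (b : ι → ℝ) :
    cauchyForm s μ (fun i => b i * ∏ j ∈ t, (μ i - m j) / (μ i + m j)) ≤ cauchyForm s μ b := by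
  induction t using Finset.cons_induction with
  | empty => simp
  | cons j t hj ih =>
    rw [Finset.forall_mem_cons] at hm
    refine le_trans ?_ (ih hm.2)
    have h := cauchyForm_sub_cauchyForm_blaschke hμ hm.1
      (fun i => b i * ∏ j ∈ t, (μ i - m j) / (μ i + m j))
    have hfun : (fun i => b i * ∏ j ∈ Finset.cons j t hj, (μ i - m j) / (μ i + m j)) =
        fun i => b i * (∏ j ∈ t, (μ i - m j) / (μ i + m j)) * ((μ i - m j) / (μ i + m j)) := by
      funext i
      rw [Finset.prod_cons]
      ring
    rw [hfun, ← sub_nonneg, h]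
    have := hm.1
    positivity

-- The Blaschke product with zeros `μ j`, `j ≠ k`, annihilates all terms except the `k`-th.
lemma sq_mul_prod_blaschke_le_cauchyForm [DecidableEq ι] (hμ : ∀ i ∈ s, 0 < μ i) {k : ι}
    (hk : k ∈ s) (b : ι → ℝ) :
    (b k * ∏ j ∈ s.erase k, (μ k - μ j) / (μ k + μ j)) ^ 2 / (2 * μ k) ≤ cauchyForm s μ b := by
  refine le_trans (le_of_eq ?_) (cauchyForm_prod_blaschke_le (t := s.erase k) hμ
    (fun j hj => hμ j (Finset.mem_of_mem_erase hj)) b)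
  have hzero : ∀ i ∈ s, i ≠ k → ∏ j ∈ s.erase k, (μ i - μ j) / (μ i + μ j) = 0 :=
    fun i hi hik => Finset.prod_eq_zero (Finset.mem_erase.2 ⟨hik, hi⟩) (by simp)
  rw [cauchyForm, Finset.sum_eq_single_of_mem k hk fun i hi hik => by simp [hzero i hi hik],
    Finset.sum_eq_single_of_mem k hk fun j hj hjk => by simp [hzero j hj hjk]]
  ring

lemma prod_blaschke_mul_prod_inv_eq_one [DecidableEq ι] (hμ : ∀ i ∈ s, 0 < μ i)
    (hinj : Set.InjOn μ s) {k : ι} (hk : k ∈ s) :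
    |∏ j ∈ s.erase k, (μ k - μ j) / (μ k + μ j)| *
      ∏ j ∈ s.erase k, (μ k + μ j) / |μ k - μ j| = 1 := by
  rw [Finset.abs_prod, ← Finset.prod_mul_distrib]
  refine Finset.prod_eq_one fun j hj => ?_
  obtain ⟨hjk, hjs⟩ := Finset.mem_erase.1 hj
  have hne : |μ k - μ j| ≠ 0 := abs_ne_zero.2 (sub_ne_zero.2 (hinj.ne hk hjs hjk.symm))
  have hsum : 0 < μ k + μ j := add_pos (hμ k hk) (hμ j hjs)
  rw [abs_div, abs_of_pos hsum, div_mul_div_cancel₀ hsum.ne', div_self hne]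

end CauchyForm

section IntegralNorm

variable {ι : Type*} {s : Finset ι}

lemma continuous_sum_mul_rpow {ν : ι → ℝ} (hν : ∀ i ∈ s, 0 ≤ ν i) (b : ι → ℝ) :
    Continuous fun t : ℝ => ∑ i ∈ s, b i * t ^ ν i :=
  continuous_finsetSum _ fun i hi => continuous_const.mul (Real.continuous_rpow_const (hν i hi))

lemma integral_sum_mul_rpow {ν : ι → ℝ} (hν : ∀ i ∈ s, 0 ≤ ν i) (b : ι → ℝ) (t : ℝ) :
    ∫ u in (0 : ℝ)..t, ∑ i ∈ s, b i * u ^ ν i = ∑ i ∈ s, b i / (ν i + 1) * t ^ (ν i + 1) := by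
  rw [intervalIntegral.integral_finsetSum]
  · refine Finset.sum_congr rfl fun i hi => ?_
    have := hν i hi
    rw [intervalIntegral.integral_const_mul, integral_rpow (.inl (by linarith)),
      Real.zero_rpow (by linarith)]
    ring
  · exact fun i hi =>
      (continuous_const.mul (Real.continuous_rpow_const (hν i hi))).intervalIntegrable _ _

lemma integral_sq_sum_mul_rpow {ν : ι → ℝ} (hν : ∀ i ∈ s, 0 ≤ ν i) (b : ι → ℝ) :
    ∫ t in (0 : ℝ)..1, (∑ i ∈ s, b i * t ^ ν i) ^ 2 = cauchyForm s (fun i => ν i + 1 / 2) b := by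
  have hexpand : Set.EqOn (fun t : ℝ => (∑ i ∈ s, b i * t ^ ν i) ^ 2)
      (fun t => ∑ x ∈ s ×ˢ s, b x.1 * b x.2 * t ^ (ν x.1 + ν x.2)) (Set.uIcc 0 1) := by
    intro t ht
    rw [Set.uIcc_of_le zero_le_one] at ht
    simp only [sq, Finset.sum_mul_sum, Finset.sum_product]
    refine Finset.sum_congr rfl fun i hi => Finset.sum_congr rfl fun j hj => ?_
    rw [Real.rpow_add_of_nonneg ht.1 (hν i hi) (hν j hj)]
    ring
  have hν₂ : ∀ x ∈ s ×ˢ s, 0 ≤ ν x.1 + ν x.2 := fun x hx =>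
    add_nonneg (hν _ (Finset.mem_product.1 hx).1) (hν _ (Finset.mem_product.1 hx).2)
  rw [intervalIntegral.integral_congr hexpand, integral_sum_mul_rpow hν₂, cauchyForm,
    Finset.sum_product]
  refine Finset.sum_congr rfl fun i _ => Finset.sum_congr rfl fun j _ => ?_
  rw [Real.one_rpow, mul_one]
  ring_nf

-- The antiderivative vanishing at `0` is bounded by the `L¹`-norm, hence so is its `L²`-norm.
lemma cauchyForm_le_sq_integral_abs {ν : ι → ℝ} (hν : ∀ i ∈ s, 0 ≤ ν i) (a : ι → ℝ) :
    cauchyForm s (fun i => ν i + 3 / 2) (fun i => a i / (ν i + 1)) ≤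
      (∫ t in (0 : ℝ)..1, |∑ i ∈ s, a i * t ^ ν i|) ^ 2 := by
  set J := ∫ t in (0 : ℝ)..1, |∑ i ∈ s, a i * t ^ ν i|
  have hν₁ : ∀ i ∈ s, 0 ≤ ν i + 1 := fun i hi => add_nonneg (hν i hi) zero_le_one
  have hcont := continuous_sum_mul_rpow hν a
  have hprim : ∀ t ∈ Set.Icc (0 : ℝ) 1, |∑ i ∈ s, a i / (ν i + 1) * t ^ (ν i + 1)| ≤ J := by
    intro t ht
    rw [← integral_sum_mul_rpow hν]
    exact (intervalIntegral.abs_integral_le_integral_abs ht.1).trans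
      (intervalIntegral.integral_mono_interval le_rfl ht.1 ht.2
        (Eventually.of_forall fun _ => abs_nonneg _) (hcont.abs.intervalIntegrable _ _))
  have hform := integral_sq_sum_mul_rpow hν₁ (fun i => a i / (ν i + 1))
  calc cauchyForm s (fun i => ν i + 3 / 2) (fun i => a i / (ν i + 1))
      = ∫ t in (0 : ℝ)..1, (∑ i ∈ s, a i / (ν i + 1) * t ^ (ν i + 1)) ^ 2 := by
        rw [hform]
        congr 1
        funext i
        ring
    _ ≤ ∫ _ in (0 : ℝ)..1, J ^ 2 := by
        refine intervalIntegral.integral_mono_on zero_le_one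
          (((continuous_sum_mul_rpow hν₁ _).pow 2).intervalIntegrable _ _) (by simp) fun t ht => ?_
        exact sq_le_sq.2 ((hprim t ht).trans (le_abs_self J))
    _ = J ^ 2 := by simp

lemma abs_coeff_le_mul_integral_abs [DecidableEq ι] {ν : ι → ℝ} (hν : ∀ i ∈ s, 0 ≤ ν i)
    (hinj : Set.InjOn ν s) {k : ι} (hk : k ∈ s) (a : ι → ℝ) :
    |a k| ≤ (2 * ν k + 3) * (ν k + 1) *
      (∏ j ∈ s.erase k, (ν k + 3 / 2 + (ν j + 3 / 2)) / |ν k + 3 / 2 - (ν j + 3 / 2)|) *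
      ∫ t in (0 : ℝ)..1, |∑ i ∈ s, a i * t ^ ν i| := by
  set J := ∫ t in (0 : ℝ)..1, |∑ i ∈ s, a i * t ^ ν i|
  have hJ : 0 ≤ J := intervalIntegral.integral_nonneg zero_le_one fun _ _ => abs_nonneg _
  have hνk := hν k hk
  have hμ : ∀ i ∈ s, 0 < ν i + 3 / 2 := fun i hi => by linarith [hν i hi]
  have hone := prod_blaschke_mul_prod_inv_eq_one hμ
    (fun i hi j hj h => hinj hi hj (add_right_cancel h)) hk
  have hsq := (sq_mul_prod_blaschke_le_cauchyForm hμ hk (fun i => a i / (ν i + 1))).trans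
    (cauchyForm_le_sq_integral_abs hν a)
  set B := ∏ j ∈ s.erase k, (ν k + 3 / 2 - (ν j + 3 / 2)) / (ν k + 3 / 2 + (ν j + 3 / 2))
  set Q := ∏ j ∈ s.erase k, (ν k + 3 / 2 + (ν j + 3 / 2)) / |ν k + 3 / 2 - (ν j + 3 / 2)|
  have hQ : 0 ≤ Q := Finset.prod_nonneg fun j hj =>
    div_nonneg (add_pos (hμ k hk) (hμ j (Finset.mem_of_mem_erase hj))).le (abs_nonneg _)
  have hB : |a k / (ν k + 1) * B| ≤ (2 * ν k + 3) * J := by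
    refine abs_le_of_sq_le_sq ?_ (by positivity)
    rw [div_le_iff₀ (by linarith)] at hsq
    nlinarith [sq_nonneg J]
  calc |a k| = (ν k + 1) * (|a k / (ν k + 1) * B| * Q) := by
        rw [abs_mul, mul_assoc, hone, abs_div, abs_of_pos (by linarith : 0 < ν k + 1)]
        field_simp
    _ ≤ (ν k + 1) * ((2 * ν k + 3) * J * Q) := by gcongr
    _ = (2 * ν k + 3) * (ν k + 1) * Q * J := by ring

end IntegralNorm

section ProductEstimate

lemma factorial_card_le_prod_add_one {ι : Type*} {s : Finset ι} {d : ι → ℕ}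
    (hd : Set.InjOn d s) : s.card.factorial ≤ ∏ i ∈ s, (d i + 1) := by
  classical
  rw [← Finset.card_image_of_injOn hd, ← Finset.prod_image hd (f := fun n => n + 1)]
  induction s.image d using Finset.induction_on_max with
  | empty => simp
  | insert n t hn ih =>
    have hnt : n ∉ t := fun h => (hn n h).false
    have hcard : t.card ≤ n := by
      simpa using Finset.card_le_card fun m hm => Finset.mem_range.2 (hn m hm)
    rw [Finset.card_insert_of_notMem hnt, Finset.prod_insert hnt, Nat.factorial_succ]
    gcongr

lemma prod_div_add_one_le_exp {ι : Type*} {s : Finset ι} {d : ι → ℕ} (hd : Set.InjOn d s) {x : ℝ}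
    (hx : 0 ≤ x) : ∏ i ∈ s, x / ((d i : ℝ) + 1) ≤ Real.exp x := by
  have hfac : (s.card.factorial : ℝ) ≤ ∏ i ∈ s, ((d i : ℝ) + 1) := by
    exact_mod_cast factorial_card_le_prod_add_one hd
  calc ∏ i ∈ s, x / ((d i : ℝ) + 1) = x ^ s.card / ∏ i ∈ s, ((d i : ℝ) + 1) := by
        rw [Finset.prod_div_distrib, Finset.prod_const]
    _ ≤ x ^ s.card / s.card.factorial := by gcongr
    _ ≤ Real.exp x := Real.pow_div_factorial_le_exp x hx _

lemma prod_div_abs_sub_le_exp {s : Finset ℕ} {k : ℕ} (hk : k ∉ s) {x : ℝ} (hx : 0 ≤ x) :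
    ∏ j ∈ s, x / |(k : ℝ) - j| ≤ Real.exp (2 * x) := by
  have hbelow : ∏ j ∈ s with j < k, x / |(k : ℝ) - j| ≤ Real.exp x := by
    refine le_trans (Finset.prod_congr rfl fun j hj => ?_).le
      (prod_div_add_one_le_exp (d := fun j => k - 1 - j) ?_ hx)
    · obtain ⟨d, rfl⟩ := Nat.exists_eq_add_of_lt (Finset.mem_filter.1 hj).2
      rw [show j + d + 1 - 1 - j = d by omega, abs_of_nonneg] <;> push_cast
      · ring
      · linarith
    · intro i hi j hj hij
      simp only [Finset.coe_filter, Set.mem_ofPred_eq] at hi hj hij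
      omega
  have habove : ∏ j ∈ s with ¬ j < k, x / |(k : ℝ) - j| ≤ Real.exp x := by
    have hne : ∀ j ∈ s, j ≠ k := fun j hj h => hk (h ▸ hj)
    refine le_trans (Finset.prod_congr rfl fun j hj => ?_).le
      (prod_div_add_one_le_exp (d := fun j => j - k - 1) ?_ hx)
    · obtain ⟨hjs, hjk⟩ := Finset.mem_filter.1 hj
      obtain ⟨d, rfl⟩ := Nat.exists_eq_add_of_lt ((not_lt.1 hjk).lt_of_ne (hne j hjs).symm)
      rw [show k + d + 1 - k - 1 = d by omega, abs_sub_comm, abs_of_nonneg] <;> push_cast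
      · ring
      · linarith
    · intro i hi j hj hij
      simp only [Finset.coe_filter, Set.mem_ofPred_eq] at hi hj hij
      have := hne i hi.1
      have := hne j hj.1
      omega
  rw [← Finset.prod_filter_mul_prod_filter_not s (· < k), two_mul, Real.exp_add]
  gcongr

lemma exists_sum_min_one_div_le {ι : Type*} {μ : ι → ℝ}
    (hsum : Summable fun i => 1 / μ i) {τ : ℝ} (hτ : 0 < τ) :
    ∃ C, ∀ x ≥ 0, ∀ s : Finset ι, ∑ i ∈ s, min 1 (x / μ i) ≤ C + τ * x := by
  classical
  obtain ⟨t, ht⟩ := hsum.vanishing (Iio_mem_nhds hτ)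
  refine ⟨t.card, fun x hx s => ?_⟩
  rw [← Finset.sum_inter_add_sum_sdiff s t]
  gcongr
  · calc ∑ i ∈ s ∩ t, min 1 (x / μ i) ≤ ∑ i ∈ s ∩ t, 1 :=
          Finset.sum_le_sum fun i _ => min_le_left _ _
      _ ≤ t.card := by
          rw [Finset.sum_const, nsmul_one]
          exact_mod_cast Finset.card_le_card Finset.inter_subset_right
  · calc ∑ i ∈ s \ t, min 1 (x / μ i) ≤ ∑ i ∈ s \ t, x * (1 / μ i) :=
          Finset.sum_le_sum fun i _ => (min_le_right _ _).trans_eq (by ring)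
      _ = (∑ i ∈ s \ t, 1 / μ i) * x := by rw [← Finset.mul_sum, mul_comm]
      _ ≤ τ * x := by
          gcongr
          exact (ht (s \ t) Finset.sdiff_disjoint).le

lemma add_div_abs_sub_le_exp {x y : ℝ} (hx : 0 < x) (hxy : 3 * x ≤ y) :
    (x + y) / |x - y| ≤ Real.exp (3 * x / y) := by
  have hy : 0 < y := by linarith
  rw [abs_sub_comm, abs_of_pos (by linarith)]
  refine le_trans ?_ (Real.add_one_le_exp _)
  rw [div_le_iff₀ (by linarith), div_add_one hy.ne', div_mul_eq_mul_div, le_div_iff₀ hy]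
  nlinarith

lemma mul_abs_sub_le_abs_sub {μ : ℕ → ℝ} {c : ℝ} (hgap : ∀ k, c ≤ μ (k + 1) - μ k)
    (i j : ℕ) : c * |(i : ℝ) - j| ≤ |μ i - μ j| := by
  wlog hij : i ≤ j generalizing i j
  · rw [abs_sub_comm, abs_sub_comm (μ i)]
    exact this j i (le_of_not_ge hij)
  have hmono : Monotone fun k : ℕ => μ k - c * k := monotone_nat_of_le_succ fun k => by
    have := hgap k
    push_cast
    linarith
  have hle : μ i - c * i ≤ μ j - c * j := hmono hij
  have hcast : (i : ℝ) ≤ j := by exact_mod_cast hij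
  rw [abs_sub_comm, abs_of_nonneg (sub_nonneg.2 hcast), abs_sub_comm]
  exact le_trans (by linarith) (le_abs_self _)

lemma add_div_abs_sub_le_mul {x y d : ℝ} (hx : 0 < x) (hxy : y ≤ 3 * x) (hd : 0 < d)
    (hdist : d ≤ |x - y|) : (x + y) / |x - y| ≤ 4 * x / d := by
  gcongr
  linarith

lemma prod_le_prod_filter_mul_prod {ι : Type*} {s : Finset ι} {P : ι → Prop} [DecidablePred P]
    {f g e : ι → ℝ} (hf : ∀ i ∈ s, 0 ≤ f i) (hP : ∀ i ∈ s, P i → f i ≤ g i * e i)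
    (hnP : ∀ i ∈ s, ¬ P i → f i ≤ e i) :
    ∏ i ∈ s, f i ≤ (∏ i ∈ s with P i, g i) * ∏ i ∈ s, e i := by
  rw [Finset.prod_filter, ← Finset.prod_mul_distrib]
  refine Finset.prod_le_prod hf fun i hi => ?_
  split_ifs with h
  · exact hP i hi h
  · simpa using hnP i hi h

lemma prod_add_div_abs_sub_le {μ : ℕ → ℝ} (hμ : ∀ k, 0 < μ k) {c : ℝ} (hc : 0 < c)
    (hsep : ∀ i j : ℕ, c * |(i : ℝ) - j| ≤ |μ i - μ j|) {ε M : ℝ} (hε : 0 < ε) (hM₁ : 1 ≤ M)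
    (hM : 8 / (c * ε) ≤ Real.exp M) {s : Finset ℕ} {k : ℕ} (hk : k ∉ s) :
    ∏ j ∈ s, (μ k + μ j) / |μ k - μ j| ≤
      Real.exp (ε * μ k) * Real.exp (M * ∑ j ∈ s, min 1 (3 * μ k / μ j)) := by
  set x := μ k
  have hx : 0 < x := hμ k
  have hnear : ∀ j ∈ s, μ j ≤ 3 * x → (x + μ j) / |x - μ j| ≤
      ε / 2 * x / |(k : ℝ) - j| * Real.exp (M * min 1 (3 * x / μ j)) := by
    intro j hj hjx
    have hkj : 0 < |(k : ℝ) - j| :=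
      abs_pos.2 (sub_ne_zero.2 (Nat.cast_injective.ne fun h => hk (h ▸ hj)))
    rw [min_eq_left ((one_le_div (hμ j)).2 hjx), mul_one]
    calc (x + μ j) / |x - μ j| ≤ 4 * x / (c * |(k : ℝ) - j|) :=
          add_div_abs_sub_le_mul hx hjx (mul_pos hc hkj) (hsep k j)
      _ = ε / 2 * x / |(k : ℝ) - j| * (8 / (c * ε)) := by field_simp; norm_num
      _ ≤ _ := by gcongr
  have hfar : ∀ j, ¬ μ j ≤ 3 * x →
      (x + μ j) / |x - μ j| ≤ Real.exp (M * min 1 (3 * x / μ j)) := by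
    intro j hj
    have hjx := (not_le.1 hj).le
    refine (add_div_abs_sub_le_exp hx hjx).trans (Real.exp_le_exp.2 ?_)
    rw [min_eq_right ((div_le_one (hμ j)).2 hjx)]
    exact le_mul_of_one_le_left (div_nonneg (by positivity) (hμ j).le) hM₁
  rw [Finset.mul_sum, Real.exp_sum]
  refine (prod_le_prod_filter_mul_prod
    (fun j _ => div_nonneg (add_pos hx (hμ j)).le (abs_nonneg _)) hnear
    fun j _ => hfar j).trans ?_
  gcongr
  refine (prod_div_abs_sub_le_exp (fun h => hk (Finset.mem_filter.1 h).1)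
    (by positivity)).trans_eq ?_
  ring_nf

lemma exists_prod_add_div_abs_sub_le_exp {μ : ℕ → ℝ} (hμ : ∀ k, 0 < μ k)
    (hsum : Summable fun k => 1 / μ k) {c : ℝ} (hc : 0 < c)
    (hsep : ∀ i j : ℕ, c * |(i : ℝ) - j| ≤ |μ i - μ j|) {ε : ℝ} (hε : 0 < ε) :
    ∃ C, ∀ s : Finset ℕ, ∀ k ∉ s,
      ∏ j ∈ s, (μ k + μ j) / |μ k - μ j| ≤ C * Real.exp (ε * μ k) := by
  obtain ⟨M, hM₁, hM⟩ : ∃ M : ℝ, 1 ≤ M ∧ 8 / (c * (ε / 2)) ≤ Real.exp M :=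
    ((eventually_ge_atTop 1).and (Real.tendsto_exp_atTop.eventually_ge_atTop _)).exists
  obtain ⟨C, hC⟩ := exists_sum_min_one_div_le hsum (τ := ε / (6 * M)) (by positivity)
  refine ⟨Real.exp (M * C), fun s k hk => ?_⟩
  have hk₀ := hμ k
  calc ∏ j ∈ s, (μ k + μ j) / |μ k - μ j|
      ≤ Real.exp (ε / 2 * μ k) * Real.exp (M * ∑ j ∈ s, min 1 (3 * μ k / μ j)) :=
        prod_add_div_abs_sub_le hμ hc hsep (by positivity) hM₁ hM hk
    _ ≤ Real.exp (ε / 2 * μ k) * Real.exp (M * (C + ε / (6 * M) * (3 * μ k))) := by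
        gcongr
        exact hC _ (by positivity) s
    _ = Real.exp (M * C) * Real.exp (ε * μ k) := by
        rw [← Real.exp_add, ← Real.exp_add]
        congr 1
        field_simp
        ring

end ProductEstimate

/-- The Müntz series `t ↦ ∑ k, a k * t ^ Λ k`. Finitely supported `a` give the Müntz polynomials;
where the series is not summable, the value is the junk value `0` of `tsum`. -/
noncomputable def muntzSeries {ι : Type*} (Λ a : ι → ℝ) (t : ℝ) : ℝ :=
  ∑' k, a k * t ^ Λ k

section MuntzPolynomials

variable {ι : Type*} {Λ : ι → ℝ}

lemma muntzSeries_finsupp (Λ : ι → ℝ) (a : ι →₀ ℝ) (t : ℝ) :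
    muntzSeries Λ a t = ∑ k ∈ a.support, a k * t ^ Λ k :=
  tsum_eq_sum fun k hk => by rw [Finsupp.notMem_support_iff.1 hk, zero_mul]

lemma continuous_muntzSeries_finsupp (hΛ : ∀ k, 0 < Λ k) (a : ι →₀ ℝ) :
    Continuous (muntzSeries Λ a) := by
  rw [funext (muntzSeries_finsupp Λ a)]
  exact continuous_sum_mul_rpow (fun k _ => (hΛ k).le) a

lemma muntzSeries_finsupp_add (Λ : ι → ℝ) (a b : ι →₀ ℝ) :
    muntzSeries Λ (a + b : ι →₀ ℝ) = muntzSeries Λ a + muntzSeries Λ b := by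
  funext t
  have hsummable (c : ι →₀ ℝ) : Summable fun k => c k * t ^ Λ k :=
    summable_of_ne_finset_zero (s := c.support) fun k hk => by
      rw [Finsupp.notMem_support_iff.1 hk, zero_mul]
  simp only [muntzSeries, Pi.add_apply, Finsupp.add_apply, add_mul]
  exact (hsummable a).tsum_add (hsummable b)

lemma muntzSeries_finsupp_smul (Λ : ι → ℝ) (c : ℝ) (a : ι →₀ ℝ) :
    muntzSeries Λ (c • a : ι →₀ ℝ) = c • muntzSeries Λ a := by
  funext t
  simp only [muntzSeries, Pi.smul_apply, Finsupp.smul_apply, smul_eq_mul, mul_assoc, tsum_mul_left]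

end MuntzPolynomials

section CoefficientBound

lemma two_mul_add_three_mul_add_one_le_exp {ε x : ℝ} (hε : 0 < ε) (hx : 0 ≤ x) :
    (2 * x + 3) * (x + 1) ≤ 3 * (1 + 2 / ε) ^ 2 * Real.exp (ε * x) := by
  have hexp : 1 + ε / 2 * x ≤ Real.exp (ε / 2 * x) := by
    linarith [Real.add_one_le_exp (ε / 2 * x)]
  have hlin : x + 1 ≤ (1 + 2 / ε) * Real.exp (ε / 2 * x) :=
    calc x + 1 ≤ (1 + 2 / ε) * (1 + ε / 2 * x) := by
          have : (1 + 2 / ε) * (1 + ε / 2 * x) = x + 1 + (2 / ε + ε / 2 * x) := by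
            field_simp
            ring
          rw [this]
          exact le_add_of_nonneg_right (by positivity)
      _ ≤ _ := by gcongr
  calc (2 * x + 3) * (x + 1) ≤ 3 * (x + 1) ^ 2 := by nlinarith
    _ ≤ 3 * ((1 + 2 / ε) * Real.exp (ε / 2 * x)) ^ 2 := by gcongr
    _ = 3 * (1 + 2 / ε) ^ 2 * Real.exp (ε * x) := by
        rw [mul_pow, ← Real.exp_nat_mul]
        ring_nf

lemma exists_abs_coeff_le_integral_muntzSeries {Λ : ℕ → ℝ} (hpos : ∀ k, 0 < Λ k)
    (hgap : ∃ c > 0, ∀ k, c ≤ Λ (k + 1) - Λ k) (hMuntz : Summable fun k => 1 / Λ k)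
    {ε : ℝ} (hε : 0 < ε) :
    ∃ C, ∀ (a : ℕ →₀ ℝ) (k : ℕ),
      |a k| ≤ C * Real.exp (ε * Λ k) * ∫ t in (0 : ℝ)..1, |muntzSeries Λ a t| := by
  obtain ⟨c, hc, hgap⟩ := hgap
  have hinj : Function.Injective Λ :=
    (strictMono_nat_of_lt_succ fun k => by linarith [hgap k]).injective
  have hsum : Summable fun k => 1 / (Λ k + 3 / 2) :=
    hMuntz.of_nonneg_of_le (fun k => by have := hpos k; positivity)
      fun k => one_div_le_one_div_of_le (hpos k) (by linarith)
  obtain ⟨C, hC⟩ := exists_prod_add_div_abs_sub_le_exp (μ := fun k => Λ k + 3 / 2)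
    (fun k => by linarith [hpos k]) hsum hc
    (mul_abs_sub_le_abs_sub fun k => by linarith [hgap k]) (half_pos hε)
  refine ⟨3 * (1 + 2 / (ε / 2)) ^ 2 * (C * Real.exp (ε / 2 * (3 / 2))), fun a k => ?_⟩
  have hCexp : 0 ≤ C * Real.exp (ε / 2 * (Λ k + 3 / 2)) := by
    simpa using zero_le_one.trans (hC ∅ k (Finset.notMem_empty k))
  have hC₀ : 0 ≤ C := nonneg_of_mul_nonneg_left hCexp (Real.exp_pos _)
  have hJ : 0 ≤ ∫ t in (0 : ℝ)..1, |muntzSeries Λ a t| :=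
    intervalIntegral.integral_nonneg zero_le_one fun _ _ => abs_nonneg _
  by_cases hk : k ∈ a.support
  · have hbound := abs_coeff_le_mul_integral_abs (fun i _ => (hpos i).le) hinj.injOn hk a
    simp only [← muntzSeries_finsupp] at hbound
    calc |a k| ≤ _ := hbound
      _ ≤ 3 * (1 + 2 / (ε / 2)) ^ 2 * Real.exp (ε / 2 * Λ k) *
            (C * Real.exp (ε / 2 * (Λ k + 3 / 2))) * ∫ t in (0 : ℝ)..1, |muntzSeries Λ a t| := by
          refine mul_le_mul_of_nonneg_right (mul_le_mul
            (two_mul_add_three_mul_add_one_le_exp (half_pos hε) (hpos k).le)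
            (hC _ k (Finset.notMem_erase k _)) ?_ (by positivity)) hJ
          exact Finset.prod_nonneg fun j _ =>
            div_nonneg (by linarith [hpos k, hpos j]) (abs_nonneg _)
      _ = _ := by
          rw [mul_add, Real.exp_add, show ε * Λ k = ε / 2 * Λ k + ε / 2 * Λ k by ring, Real.exp_add]
          ring
  · rw [Finsupp.notMem_support_iff.1 hk, abs_zero]
    positivity

end CoefficientBound

/-- A set of coefficient sequences is subexponential relative to the exponents `Λ` if, for every
`ε > 0`, the bound `a k = O(exp (ε * Λ k))` holds uniformly over the set. The Müntz series of its
members then converge uniformly on compact subsets of `[0, 1)`. -/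
def IsSubexponential {ι : Type*} (Λ : ι → ℝ) (A : Set (ι → ℝ)) : Prop :=
  ∀ ε > 0, ∃ C, ∀ a ∈ A, ∀ k, |a k| ≤ C * Real.exp (ε * Λ k)

namespace IsSubexponential

variable {ι : Type*} {Λ : ι → ℝ} {A : Set (ι → ℝ)}

lemma mono {B : Set (ι → ℝ)} (hB : IsSubexponential Λ B) (hAB : A ⊆ B) : IsSubexponential Λ A :=
  fun ε hε => (hB ε hε).imp fun _ hC a ha => hC a (hAB ha)

lemma closure (hA : IsSubexponential Λ A) : IsSubexponential Λ (closure A) := by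
  intro ε hε
  obtain ⟨C, hC⟩ := hA ε hε
  refine ⟨C, fun a ha k => ?_⟩
  exact closure_minimal (fun b hb => hC b hb k)
    (isClosed_le (continuous_apply k).abs continuous_const) ha

lemma exists_tendsto_subseq [Countable ι] (hA : IsSubexponential Λ A) {b : ℕ → ι → ℝ}
    (hb : ∀ m, b m ∈ A) :
    ∃ a ∈ _root_.closure A, ∃ φ : ℕ → ℕ, StrictMono φ ∧ Tendsto (b ∘ φ) atTop (𝓝 a) := by
  obtain ⟨C, hC⟩ := hA 1 one_pos
  have hmem : ∀ m, b m ∈ Set.univ.pi fun k =>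
      Set.Icc (-(C * Real.exp (1 * Λ k))) (C * Real.exp (1 * Λ k)) :=
    fun m k _ => abs_le.1 (hC (b m) (hb m) k)
  obtain ⟨a, -, φ, hφ, hlim⟩ :=
    (isCompact_univ_pi fun _ => isCompact_Icc).tendsto_subseq hmem
  exact ⟨a, mem_closure_of_tendsto hlim (Eventually.of_forall fun m => hb (φ m)), φ, hφ, hlim⟩

end IsSubexponential

section MuntzSeries

variable {ι : Type*} {Λ : ι → ℝ} {A : Set (ι → ℝ)}

lemma summable_exp_neg_mul (hΛ : ∀ k, 0 < Λ k) (hMuntz : Summable fun k => 1 / Λ k) {s : ℝ}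
    (hs : 0 < s) : Summable fun k => Real.exp (-s * Λ k) := by
  refine (hMuntz.mul_left (1 / s)).of_nonneg_of_le (fun k => (Real.exp_pos _).le) fun k => ?_
  have hsΛ : 0 < s * Λ k := mul_pos hs (hΛ k)
  rw [neg_mul, Real.exp_neg, one_div_mul_one_div, ← one_div]
  exact one_div_le_one_div_of_le hsΛ (by linarith [Real.add_one_le_exp (s * Λ k)])

lemma IsSubexponential.exists_summable_bound (hA : IsSubexponential Λ A) (hΛ : ∀ k, 0 < Λ k)
    (hMuntz : Summable fun k => 1 / Λ k) {r : ℝ} (hr₀ : 0 < r) (hr₁ : r < 1) :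
    ∃ u : ι → ℝ, Summable u ∧ ∀ a ∈ A, ∀ k, |a k| * r ^ Λ k ≤ u k := by
  have hlog : 0 < -Real.log r / 2 := half_pos (neg_pos.2 (Real.log_neg hr₀ hr₁))
  obtain ⟨C, hC⟩ := hA _ hlog
  refine ⟨_, (summable_exp_neg_mul hΛ hMuntz hlog).mul_left C, fun a ha k => ?_⟩
  calc |a k| * r ^ Λ k ≤ C * Real.exp (-Real.log r / 2 * Λ k) * r ^ Λ k := by
        gcongr
        exact hC a ha k
    _ = C * Real.exp (-(-Real.log r / 2) * Λ k) := by
        rw [Real.rpow_def_of_pos hr₀, mul_assoc, ← Real.exp_add]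
        ring_nf

lemma abs_mul_rpow_le (hΛ : ∀ k, 0 < Λ k) (a : ι → ℝ) {r t : ℝ} (ht : t ∈ Set.Icc 0 r) (k : ι) :
    |a k * t ^ Λ k| ≤ |a k| * r ^ Λ k := by
  rw [abs_mul, abs_of_nonneg (Real.rpow_nonneg ht.1 _)]
  gcongr
  exacts [ht.1, (hΛ k).le, ht.2]

lemma abs_muntzSeries_le_tsum (hΛ : ∀ k, 0 < Λ k) {a : ι → ℝ} {r t : ℝ} (ht : t ∈ Set.Icc 0 r)
    (ha : Summable fun k => |a k| * r ^ Λ k) : |muntzSeries Λ a t| ≤ ∑' k, |a k| * r ^ Λ k :=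
  (Real.norm_eq_abs _).symm.trans_le (tsum_of_norm_bounded ha.hasSum (abs_mul_rpow_le hΛ a ht))

lemma muntzSeries_sub (hΛ : ∀ k, 0 < Λ k) {a b : ι → ℝ} {r t : ℝ} (ht : t ∈ Set.Icc 0 r)
    (ha : Summable fun k => |a k| * r ^ Λ k) (hb : Summable fun k => |b k| * r ^ Λ k) :
    muntzSeries Λ (a - b) t = muntzSeries Λ a t - muntzSeries Λ b t := by
  simp only [muntzSeries, Pi.sub_apply, sub_mul]
  exact (ha.of_norm_bounded (abs_mul_rpow_le hΛ a ht)).tsum_sub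
    (hb.of_norm_bounded (abs_mul_rpow_le hΛ b ht))

lemma IsSubexponential.tendstoUniformlyOn_muntzSeries (hA : IsSubexponential Λ A)
    (hΛ : ∀ k, 0 < Λ k) (hMuntz : Summable fun k => 1 / Λ k) {α : Type*} {l : Filter α} [l.NeBot]
    {b : α → ι → ℝ} (hb : ∀ m, b m ∈ A) {a : ι → ℝ} (hlim : Tendsto b l (𝓝 a)) {r : ℝ}
    (hr₀ : 0 < r) (hr₁ : r < 1) :
    TendstoUniformlyOn (fun m => muntzSeries Λ (b m)) (muntzSeries Λ a) l (Set.Icc 0 r) := by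
  have ha : a ∈ _root_.closure A := mem_closure_of_tendsto hlim (Eventually.of_forall hb)
  obtain ⟨u, hu, hle⟩ := hA.closure.exists_summable_bound hΛ hMuntz hr₀ hr₁
  have hsummable : ∀ c ∈ _root_.closure A, Summable fun k => |c k| * r ^ Λ k := fun c hc =>
    hu.of_nonneg_of_le (fun k => by positivity) (hle c hc)
  have hdiff : ∀ m k, |(a - b m) k| * r ^ Λ k ≤ u k + u k := fun m k =>
    calc |(a - b m) k| * r ^ Λ k ≤ (|a k| + |b m k|) * r ^ Λ k := by
          gcongr
          exact abs_sub _ _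
      _ ≤ u k + u k := by
          rw [add_mul]
          exact add_le_add (hle a ha k) (hle (b m) (subset_closure (hb m)) k)
  have htsum : Tendsto (fun m => ∑' k, |(a - b m) k| * r ^ Λ k) l (𝓝 0) := by
    rw [show (0 : ℝ) = ∑' _ : ι, 0 from tsum_zero.symm]
    refine tendsto_tsum_of_dominated_convergence (hu.add hu) (fun k => ?_)
      (Eventually.of_forall fun m k => ?_)
    · have hk := ((tendsto_pi_nhds.1 hlim k).const_sub (a k)).abs.mul_const (r ^ Λ k)
      simpa using hk
    · rw [Real.norm_of_nonneg (by positivity)]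
      exact hdiff m k
  rw [Metric.tendstoUniformlyOn_iff]
  intro η hη
  filter_upwards [htsum.eventually_lt_const hη] with m hm t ht
  rw [Real.dist_eq, ← muntzSeries_sub hΛ ht (hsummable a ha)
    (hsummable (b m) (subset_closure (hb m)))]
  refine (abs_muntzSeries_le_tsum hΛ ht ?_).trans_lt hm
  exact (hu.add hu).of_nonneg_of_le (fun k => by positivity) (hdiff m)

lemma IsSubexponential.analyticOnNhd_muntzSeries {a : ι → ℝ} (ha : IsSubexponential Λ {a})
    (hΛ : ∀ k, 0 < Λ k) (hMuntz : Summable fun k => 1 / Λ k) :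
    AnalyticOnNhd ℝ (muntzSeries Λ a) (Set.Ioo 0 1) := by
  intro t ht
  obtain ⟨r, htr, hr₁⟩ := exists_between ht.2
  obtain ⟨u, hu, hle⟩ := ha.exists_summable_bound hΛ hMuntz (ht.1.trans htr) hr₁
  set U : Set ℂ := {z | 0 < z.re} ∩ Metric.ball 0 r
  have hU : IsOpen U := (isOpen_lt continuous_const Complex.continuous_re).inter Metric.isOpen_ball
  have hdiff : DifferentiableOn ℂ (fun z => ∑' k, (a k : ℂ) * z ^ (Λ k : ℂ)) U := by
    refine Complex.differentiableOn_tsum_of_summable_norm hu (fun k z hz => ?_) hU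
      fun k z hz => ?_
    · exact ((differentiableAt_id.cpow_const (.inl hz.1)).const_mul _).differentiableWithinAt
    · have hzr : ‖z‖ ∈ Set.Icc 0 r := ⟨norm_nonneg z, (mem_ball_zero_iff.1 hz.2).le⟩
      rw [norm_mul, Complex.norm_cpow_real, Complex.norm_real, ← Real.norm_of_nonneg
        (Real.rpow_nonneg hzr.1 (Λ k)), ← norm_mul]
      exact (abs_mul_rpow_le hΛ a hzr k).trans (hle a rfl k)
  have htU : (t : ℂ) ∈ U := ⟨by simpa using ht.1, by simpa [abs_of_pos ht.1] using htr⟩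
  refine (hdiff.analyticAt (hU.mem_nhds htU)).re_ofReal.congr ?_
  filter_upwards [Ioi_mem_nhds ht.1] with x hx
  rw [muntzSeries, ← Complex.ofReal_re (∑' k, a k * x ^ Λ k), Complex.ofReal_tsum]
  simp only [Complex.ofReal_mul, Complex.ofReal_cpow (le_of_lt hx)]

lemma IsSubexponential.muntzSeries_eqOn_zero {a : ι → ℝ} (ha : IsSubexponential Λ {a})
    (hΛ : ∀ k, 0 < Λ k) (hMuntz : Summable fun k => 1 / Λ k) {δ r : ℝ} (hδ : 0 ≤ δ) (hδr : δ < r)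
    (hr : r ≤ 1) (hzero : Set.EqOn (muntzSeries Λ a) 0 (Set.Ioo δ r)) :
    Set.EqOn (muntzSeries Λ a) 0 (Set.Ico 0 1) := by
  obtain ⟨t₀, ht₀⟩ := exists_between hδr
  have hev : muntzSeries Λ a =ᶠ[𝓝 t₀] 0 := hzero.eventuallyEq_of_mem (Ioo_mem_nhds ht₀.1 ht₀.2)
  have hinterior : Set.EqOn (muntzSeries Λ a) 0 (Set.Ioo 0 1) :=
    (ha.analyticOnNhd_muntzSeries hΛ hMuntz).eqOn_zero_of_preconnected_of_eventuallyEq_zero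
      isPreconnected_Ioo ⟨hδ.trans_lt ht₀.1, ht₀.2.trans_le hr⟩ hev
  intro t ht
  rcases ht.1.eq_or_lt with rfl | ht'
  · simp only [muntzSeries, Real.zero_rpow (hΛ _).ne', mul_zero, tsum_zero, Pi.zero_apply]
  · exact hinterior ⟨ht', ht.2⟩

end MuntzSeries

section LpNorm

variable {α : Type*} [MeasurableSpace α] {μ : Measure α} {p : ℝ≥0∞}

lemma eLpNorm_restrict_union_le {E : Type*} [NormedAddCommGroup E] {f : α → E} {s t : Set α}
    (hp : 1 ≤ p) (hs : MeasurableSet s) (hf : AEStronglyMeasurable f (μ.restrict (s ∪ t))) :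
    eLpNorm f p (μ.restrict (s ∪ t)) ≤
      eLpNorm f p (μ.restrict s) + eLpNorm f p (μ.restrict t) :=
  calc eLpNorm f p (μ.restrict (s ∪ t))
      = eLpNorm (s.indicator f + sᶜ.indicator f) p (μ.restrict (s ∪ t)) := by
        rw [Set.indicator_self_add_compl]
    _ ≤ eLpNorm (s.indicator f) p (μ.restrict (s ∪ t)) +
          eLpNorm (sᶜ.indicator f) p (μ.restrict (s ∪ t)) :=
        eLpNorm_add_le (hf.indicator hs) (hf.indicator hs.compl) hp
    _ ≤ eLpNorm f p (μ.restrict s) + eLpNorm f p (μ.restrict t) := by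
        rw [eLpNorm_indicator_eq_eLpNorm_restrict hs,
          eLpNorm_indicator_eq_eLpNorm_restrict hs.compl, Measure.restrict_restrict hs,
          Measure.restrict_restrict hs.compl]
        gcongr
        · exact Set.inter_subset_left
        · exact fun x hx => hx.2.resolve_left hx.1

lemma tendsto_eLpNorm_sub_of_tendstoUniformlyOn {E ι : Type*} [NormedAddCommGroup E]
    {F : ι → α → E} {f : α → E} {l : Filter ι} {s : Set α} (hs : MeasurableSet s)
    (hμs : μ s ≠ ∞) (h : TendstoUniformlyOn F f l s) :
    Tendsto (fun i => eLpNorm (F i - f) p (μ.restrict s)) l (𝓝 0) := by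
  rw [ENNReal.tendsto_nhds_zero]
  intro ε hε
  obtain ⟨η, hη, hηε⟩ := ENNReal.exists_nnreal_pos_mul_lt
    (ENNReal.rpow_ne_top_of_nonneg (inv_nonneg.2 p.toReal_nonneg) hμs) hε.ne'
  filter_upwards [Metric.tendstoUniformlyOn_iff.1 h η hη] with i hi
  refine (eLpNorm_le_of_ae_bound (C := η) ?_).trans ?_
  · refine (ae_restrict_iff' hs).2 (Eventually.of_forall fun x hx => ?_)
    rw [Pi.sub_apply, ← dist_eq_norm, dist_comm]
    exact (hi x hx).le
  · simpa [mul_comm] using hηε.le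

lemma integral_abs_le_toReal_eLpNorm [IsProbabilityMeasure μ] {f : α → ℝ} (hp : 1 ≤ p)
    (hf : MemLp f p μ) : ∫ x, |f x| ∂μ ≤ (eLpNorm f p μ).toReal := by
  have h := ENNReal.toReal_mono hf.eLpNorm_ne_top (eLpNorm_le_eLpNorm_of_exponent_le hp hf.1)
  rwa [eLpNorm_one_eq_lintegral_enorm, ← integral_norm_eq_lintegral_enorm hf.1] at h

lemma memLp_restrict_Icc_of_continuous {f : ℝ → ℝ} (hf : Continuous f) (p : ℝ≥0∞) (a b : ℝ) :
    MemLp f p (volume.restrict (Set.Icc a b)) := by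
  obtain ⟨C, hC⟩ := isCompact_Icc.exists_bound_of_continuousOn hf.continuousOn
  exact MemLp.of_bound hf.aestronglyMeasurable C
    ((ae_restrict_iff' measurableSet_Icc).2 (Eventually.of_forall hC))

lemma eqOn_zero_of_tendstoUniformlyOn_of_tendsto_eLpNorm (hp : 1 ≤ p) {ι : Type*} {l : Filter ι}
    [l.NeBot] {F : ι → ℝ → ℝ} {f : ℝ → ℝ} {a b : ℝ} (hab : a < b) (hF : ∀ i, Continuous (F i))
    (hunif : TendstoUniformlyOn F f l (Set.Icc a b))
    (hnorm : Tendsto (fun i => eLpNorm (F i) p (volume.restrict (Set.Icc a b))) l (𝓝 0)) :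
    Set.EqOn f 0 (Set.Icc a b) := by
  have hf : ContinuousOn f (Set.Icc a b) :=
    hunif.continuousOn (Eventually.of_forall fun i => (hF i).continuousOn).frequently
  have hfm : AEStronglyMeasurable f (volume.restrict (Set.Icc a b)) :=
    hf.aestronglyMeasurable measurableSet_Icc
  have hle : ∀ i, eLpNorm f p (volume.restrict (Set.Icc a b)) ≤
      eLpNorm (F i) p (volume.restrict (Set.Icc a b)) +
        eLpNorm (F i - f) p (volume.restrict (Set.Icc a b)) := fun i => by
    simpa using eLpNorm_sub_le (hF i).aestronglyMeasurable
      ((hF i).aestronglyMeasurable.sub hfm) hp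
  have hlim := hnorm.add (tendsto_eLpNorm_sub_of_tendstoUniformlyOn (μ := volume) (p := p)
    measurableSet_Icc measure_Icc_lt_top.ne hunif)
  have hzero : eLpNorm f p (volume.restrict (Set.Icc a b)) = 0 := by
    simpa using ge_of_tendsto' hlim hle
  exact Measure.eqOn_Icc_of_ae_eq volume hab.ne
    ((eLpNorm_eq_zero_iff hfm (one_pos.trans_le hp).ne').1 hzero) hf continuousOn_const

lemma exists_continuousLinearMap_Lp_restrict [Fact (1 ≤ p)] {s t : Set α} (hs : MeasurableSet s)
    (hst : s ⊆ t) :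
    ∃ R : Lp ℝ p (μ.restrict t) →L[ℝ] Lp ℝ p (μ.restrict s),
      ∀ f, (R f : α → ℝ) =ᵐ[μ.restrict s] (f : α → ℝ) := by
  have h := LpToLpRestrictCLM_coeFn (X := α) (F := ℝ) (p := p) (μ := μ.restrict t) ℝ s
  have hμ : (μ.restrict t).restrict s = μ.restrict s := by
    rw [Measure.restrict_restrict hs, Set.inter_eq_left.2 hst]
  rw [← hμ]
  exact ⟨_, h⟩

end LpNorm

section BoundedBelow

lemma exists_antilipschitzWith_of_forall_not_tendsto_zero {𝕜 E F : Type*} [RCLike 𝕜]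
    [NormedAddCommGroup E] [NormedSpace 𝕜 E] [NormedAddCommGroup F] [NormedSpace 𝕜 F]
    (T : E →L[𝕜] F)
    (hT : ∀ x : ℕ → E, (∀ n, ‖x n‖ = 1) → ¬ Tendsto (fun n => T (x n)) atTop (𝓝 0)) :
    ∃ K : ℝ≥0, AntilipschitzWith K T := by
  by_contra! h
  have hex (n : ℕ) : ∃ x : E, ‖x‖ = 1 ∧ (n + 1) * ‖T x‖ < 1 := by
    by_contra! hn
    exact h (n + 1) (antilipschitz_of_bound_of_norm_one (𝕜 := 𝕜) T (by simpa using hn))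
  choose x hx hTx using hex
  refine hT x hx (squeeze_zero_norm (fun n => ?_) tendsto_one_div_add_atTop_nhds_zero_nat)
  rw [le_div_iff₀' (by positivity)]
  exact (hTx n).le

lemma exists_continuousLinearEquiv_topologicalClosure_map {𝕜 E F : Type*}
    [NontriviallyNormedField 𝕜] [NormedAddCommGroup E] [NormedSpace 𝕜 E] [CompleteSpace E]
    [NormedAddCommGroup F] [NormedSpace 𝕜 F] [CompleteSpace F] (R : E →L[𝕜] F)
    (V : Submodule 𝕜 E) {K : ℝ≥0} (hV : ∀ x ∈ V, ‖x‖ ≤ K * ‖R x‖) :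
    ∃ T : V.topologicalClosure ≃L[𝕜] (V.map (R : E →ₗ[𝕜] F)).topologicalClosure,
      ∀ x, (T x : F) = R x := by
  set S := R.comp V.topologicalClosure.subtypeL
  have hclosure : ∀ x ∈ V.topologicalClosure, ‖x‖ ≤ K * ‖R x‖ :=
    closure_minimal hV (isClosed_le continuous_norm (R.continuous.norm.const_mul _))
  have hS : AntilipschitzWith K S := S.antilipschitz_of_bound fun x => hclosure x x.2
  have hclosed : IsClosed (Set.range S) := hS.isClosed_range S.uniformContinuous
  have hrange : S.range = (V.map (R : E →ₗ[𝕜] F)).topologicalClosure := by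
    refine le_antisymm ?_ (Submodule.topologicalClosure_minimal _ ?_ hclosed)
    · rintro _ ⟨x, rfl⟩
      exact image_closure_subset_closure_image R.continuous ⟨x, x.2, rfl⟩
    · rintro _ ⟨x, hx, rfl⟩
      exact ⟨⟨x, V.le_topologicalClosure hx⟩, rfl⟩
  exact ⟨(S.equivRange hS.injective hclosed).trans (ContinuousLinearEquiv.ofEq _ _ hrange),
    fun _ => rfl⟩

end BoundedBelow

/-- The Müntz polynomials with exponents in `S`, as elements of `L_p([a,b],ℝ)`: the dense subspace
whose closure is `muntzSpace S p a b`. -/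
noncomputable def muntzPolynomials (S : Set ℝ) (p : ℝ≥0∞) [Fact (1 ≤ p)] (a b : ℝ) :
    Submodule ℝ (Lp ℝ p (volume.restrict (Set.Icc a b))) :=
  Submodule.span ℝ {g | ∃ lam ∈ S, (g : ℝ → ℝ) =ᵐ[volume.restrict (Set.Icc a b)] fun t => t ^ lam}

section MuntzSpace

variable {p : ℝ≥0∞} [Fact (1 ≤ p)]

lemma topologicalClosure_muntzPolynomials (S : Set ℝ) (a b : ℝ) :
    (muntzPolynomials S p a b).topologicalClosure = muntzSpace S p a b :=
  rfl

lemma exists_ae_eq_muntzSeries_of_mem_muntzPolynomials {ι : Type*} {Λ : ι → ℝ} {a b : ℝ}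
    {g : Lp ℝ p (volume.restrict (Set.Icc a b))} (hg : g ∈ muntzPolynomials (Set.range Λ) p a b) :
    ∃ c : ι →₀ ℝ, (g : ℝ → ℝ) =ᵐ[volume.restrict (Set.Icc a b)] muntzSeries Λ c := by
  induction hg using Submodule.span_induction with
  | mem g hg =>
    obtain ⟨_, ⟨k, rfl⟩, hg⟩ := hg
    refine ⟨Finsupp.single k 1, hg.trans (Eventually.of_forall fun t => ?_)⟩
    simp [muntzSeries_finsupp]
  | zero =>
    refine ⟨0, (Lp.coeFn_zero _ _ _).trans (Eventually.of_forall fun t => ?_)⟩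
    simp [muntzSeries]
  | add f g _ _ hf hg =>
    obtain ⟨c, hc⟩ := hf
    obtain ⟨d, hd⟩ := hg
    exact ⟨c + d, (Lp.coeFn_add f g).trans (muntzSeries_finsupp_add Λ c d ▸ hc.add hd)⟩
  | smul r f _ hf =>
    obtain ⟨c, hc⟩ := hf
    exact ⟨r • c, (Lp.coeFn_smul r f).trans (muntzSeries_finsupp_smul Λ r c ▸ hc.const_smul r)⟩

lemma map_muntzPolynomials_restrict {S : Set ℝ} (hS : ∀ lam ∈ S, 0 ≤ lam) {a b c d : ℝ}
    (hsub : Set.Icc c d ⊆ Set.Icc a b)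
    {R : Lp ℝ p (volume.restrict (Set.Icc a b)) →L[ℝ] Lp ℝ p (volume.restrict (Set.Icc c d))}
    (hR : ∀ f, (R f : ℝ → ℝ) =ᵐ[volume.restrict (Set.Icc c d)] (f : ℝ → ℝ)) :
    (muntzPolynomials S p a b).map (R : _ →ₗ[ℝ] _) = muntzPolynomials S p c d := by
  have hrestrict {f g : ℝ → ℝ} (h : f =ᵐ[volume.restrict (Set.Icc a b)] g) :
      f =ᵐ[volume.restrict (Set.Icc c d)] g := ae_restrict_of_ae_restrict_of_subset hsub h
  rw [muntzPolynomials, Submodule.map_span, muntzPolynomials]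
  congr 1
  ext g
  constructor
  · rintro ⟨f, ⟨lam, hlam, hf⟩, rfl⟩
    exact ⟨lam, hlam, (hR f).trans (hrestrict hf)⟩
  · rintro ⟨lam, hlam, hg⟩
    have hmem := memLp_restrict_Icc_of_continuous (Real.continuous_rpow_const (hS lam hlam)) p a b
    refine ⟨hmem.toLp, ⟨lam, hlam, hmem.coeFn_toLp⟩, Lp.ext ?_⟩
    exact ((hR _).trans (hrestrict hmem.coeFn_toLp)).trans hg.symm

end MuntzSpace

section Restriction

lemma tendsto_eLpNorm_Icc_zero_one_of_tendstoUniformlyOn {p : ℝ≥0∞} (hp : 1 ≤ p) {ι : Type*}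
    {l : Filter ι} {F : ι → ℝ → ℝ} (hF : ∀ i, Continuous (F i)) {δ r : ℝ} (hδ : 0 ≤ δ)
    (hδr : δ ≤ r) (hr : r ≤ 1) (hunif : TendstoUniformlyOn F 0 l (Set.Icc 0 r))
    (hnorm : Tendsto (fun i => eLpNorm (F i) p (volume.restrict (Set.Icc δ 1))) l (𝓝 0)) :
    Tendsto (fun i => eLpNorm (F i) p (volume.restrict (Set.Icc 0 1))) l (𝓝 0) := by
  have hunion : Set.Icc (0 : ℝ) r ∪ Set.Icc δ 1 = Set.Icc 0 1 := by
    rw [Set.Icc_union_Icc' hδr (by linarith), min_eq_left hδ, max_eq_right hr]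
  have hlim := (tendsto_eLpNorm_sub_of_tendstoUniformlyOn (μ := volume) (p := p)
    measurableSet_Icc measure_Icc_lt_top.ne hunif).add hnorm
  simp only [sub_zero, add_zero] at hlim
  refine tendsto_of_tendsto_of_tendsto_of_le_of_le tendsto_const_nhds hlim
    (fun _ => zero_le) fun i => ?_
  rw [← hunion]
  exact eLpNorm_restrict_union_le hp measurableSet_Icc (hF i).aestronglyMeasurable

lemma IsSubexponential.exists_subseq_tendsto_eLpNorm_zero {ι : Type*} [Countable ι] {Λ : ι → ℝ}
    {A : Set (ι → ℝ)} (hA : IsSubexponential Λ A) (hΛ : ∀ k, 0 < Λ k)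
    (hMuntz : Summable fun k => 1 / Λ k) {p : ℝ≥0∞} (hp : 1 ≤ p) {δ : ℝ} (hδ₀ : 0 ≤ δ)
    (hδ₁ : δ < 1) {b : ℕ → ι →₀ ℝ} (hb : ∀ m, ⇑(b m) ∈ A)
    (hnorm : Tendsto (fun m => eLpNorm (muntzSeries Λ (b m)) p (volume.restrict (Set.Icc δ 1)))
      atTop (𝓝 0)) :
    ∃ φ : ℕ → ℕ, StrictMono φ ∧
      Tendsto (fun m => eLpNorm (muntzSeries Λ (b (φ m))) p (volume.restrict (Set.Icc 0 1)))
        atTop (𝓝 0) := by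
  obtain ⟨r, hδr, hr₁⟩ := exists_between hδ₁
  have hr₀ : 0 < r := hδ₀.trans_lt hδr
  obtain ⟨a, ha, φ, hφ, hlim⟩ := hA.exists_tendsto_subseq hb
  have hcont : ∀ m, Continuous (muntzSeries Λ (b (φ m))) := fun m =>
    continuous_muntzSeries_finsupp hΛ _
  have hunif : TendstoUniformlyOn (fun m => muntzSeries Λ (b (φ m))) (muntzSeries Λ a) atTop
      (Set.Icc 0 r) :=
    hA.tendstoUniformlyOn_muntzSeries hΛ hMuntz (fun m => hb (φ m)) hlim hr₀ hr₁
  have hnormφ := hnorm.comp hφ.tendsto_atTop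
  have hzero_right : Set.EqOn (muntzSeries Λ a) 0 (Set.Icc δ r) := by
    refine eqOn_zero_of_tendstoUniformlyOn_of_tendsto_eLpNorm hp hδr hcont
      (hunif.mono (Set.Icc_subset_Icc_left hδ₀)) ?_
    exact tendsto_of_tendsto_of_tendsto_of_le_of_le tendsto_const_nhds hnormφ
      (fun _ => zero_le) fun m =>
        eLpNorm_mono_measure _ (Measure.restrict_mono (Set.Icc_subset_Icc_right hr₁.le) le_rfl)
  have hzero : Set.EqOn (muntzSeries Λ a) 0 (Set.Ico 0 1) :=
    (hA.closure.mono (Set.singleton_subset_iff.2 ha)).muntzSeries_eqOn_zero hΛ hMuntz hδ₀ hδr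
      hr₁.le (hzero_right.mono Set.Ioo_subset_Icc_self)
  refine ⟨φ, hφ, tendsto_eLpNorm_Icc_zero_one_of_tendstoUniformlyOn hp hcont hδ₀ hδr.le hr₁.le
    (hunif.congr_right (hzero.mono ?_)) hnormφ⟩
  exact fun t ht => ⟨ht.1, ht.2.trans_lt hr₁⟩

lemma isSubexponential_setOf_integral_muntzSeries_le_one {Λ : ℕ → ℝ} (hpos : ∀ k, 0 < Λ k)
    (hgap : ∃ c > 0, ∀ k, c ≤ Λ (k + 1) - Λ k) (hMuntz : Summable fun k => 1 / Λ k) :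
    IsSubexponential Λ ((fun c : ℕ →₀ ℝ => (c : ℕ → ℝ)) ''
      {c | ∫ t in (0 : ℝ)..1, |muntzSeries Λ c t| ≤ 1}) := by
  intro ε hε
  obtain ⟨C, hC⟩ := exists_abs_coeff_le_integral_muntzSeries hpos hgap hMuntz hε
  refine ⟨|C|, ?_⟩
  rintro _ ⟨c, hc, rfl⟩ k
  have hJ : 0 ≤ ∫ t in (0 : ℝ)..1, |muntzSeries Λ c t| :=
    intervalIntegral.integral_nonneg zero_le_one fun _ _ => abs_nonneg _
  calc |c k| ≤ C * Real.exp (ε * Λ k) * ∫ t in (0 : ℝ)..1, |muntzSeries Λ c t| := hC c k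
    _ ≤ |C| * Real.exp (ε * Λ k) * 1 := by
        gcongr
        · exact le_abs_self C
        · exact hc
    _ = |C| * Real.exp (ε * Λ k) := mul_one _

lemma integral_abs_le_norm_of_ae_eq {p : ℝ≥0∞} [hp : Fact (1 ≤ p)]
    {g : Lp ℝ p (volume.restrict (Set.Icc (0 : ℝ) 1))} {f : ℝ → ℝ}
    (hg : (g : ℝ → ℝ) =ᵐ[volume.restrict (Set.Icc 0 1)] f) :
    ∫ t in (0 : ℝ)..1, |f t| ≤ ‖g‖ := by
  have : IsProbabilityMeasure (volume.restrict (Set.Icc (0 : ℝ) 1)) := ⟨by simp⟩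
  rw [intervalIntegral.integral_of_le zero_le_one, ← integral_Icc_eq_integral_Ioc, Lp.norm_def,
    eLpNorm_congr_ae hg]
  exact integral_abs_le_toReal_eLpNorm hp.out ((memLp_congr_ae hg).1 (Lp.memLp g))

lemma exists_norm_le_mul_norm_restrict {Λ : ℕ → ℝ} (hpos : ∀ k, 0 < Λ k)
    (hgap : ∃ c > 0, ∀ k, c ≤ Λ (k + 1) - Λ k) (hMuntz : Summable fun k => 1 / Λ k)
    {p : ℝ≥0∞} [hp : Fact (1 ≤ p)] {δ : ℝ} (hδ₀ : 0 ≤ δ) (hδ₁ : δ < 1)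
    {R : Lp ℝ p (volume.restrict (Set.Icc 0 1)) →L[ℝ] Lp ℝ p (volume.restrict (Set.Icc δ 1))}
    (hR : ∀ f, (R f : ℝ → ℝ) =ᵐ[volume.restrict (Set.Icc δ 1)] (f : ℝ → ℝ)) :
    ∃ K : ℝ≥0, ∀ g ∈ muntzPolynomials (Set.range Λ) p 0 1, ‖g‖ ≤ K * ‖R g‖ := by
  set V := muntzPolynomials (Set.range Λ) p 0 1
  suffices ∃ K : ℝ≥0, AntilipschitzWith K (R.comp V.subtypeL) by
    obtain ⟨K, hK⟩ := this
    exact ⟨K, fun g hg => (R.comp V.subtypeL).bound_of_antilipschitz hK ⟨g, hg⟩⟩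
  refine exists_antilipschitzWith_of_forall_not_tendsto_zero _ fun g hg hRg => ?_
  choose c hc using fun m => exists_ae_eq_muntzSeries_of_mem_muntzPolynomials (g m).2
  have hmem : ∀ m, ⇑(c m) ∈ (fun c : ℕ →₀ ℝ => (c : ℕ → ℝ)) ''
      {c | ∫ t in (0 : ℝ)..1, |muntzSeries Λ c t| ≤ 1} := fun m =>
    ⟨c m, (integral_abs_le_norm_of_ae_eq (hc m)).trans_eq (hg m), rfl⟩
  have hδ : Tendsto (fun m => eLpNorm (muntzSeries Λ (c m)) p (volume.restrict (Set.Icc δ 1)))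
      atTop (𝓝 0) := by
    refine (tendsto_zero_iff_enorm_tendsto_zero.1 hRg).congr fun m => ?_
    rw [Lp.enorm_def]
    exact eLpNorm_congr_ae ((hR _).trans
      (ae_restrict_of_ae_restrict_of_subset (Set.Icc_subset_Icc_left hδ₀) (hc m)))
  obtain ⟨φ, -, hφ⟩ := (isSubexponential_setOf_integral_muntzSeries_le_one hpos hgap
    hMuntz).exists_subseq_tendsto_eLpNorm_zero hpos hMuntz hp.out hδ₀ hδ₁ hmem hδ
  have hone : ∀ m, eLpNorm (muntzSeries Λ (c (φ m))) p (volume.restrict (Set.Icc 0 1)) = 1 := by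
    intro m
    have hnorm : ‖(g (φ m)).1‖ = 1 := hg (φ m)
    rw [← eLpNorm_congr_ae (hc (φ m)), ← Lp.enorm_def, ← ofReal_norm, hnorm, ENNReal.ofReal_one]
  simp only [hone] at hφ
  exact one_ne_zero (tendsto_nhds_unique tendsto_const_nhds hφ)

end Restriction

theorem muntzSpace_isomorphic_restrict_general
    (Λ : ℕ → ℝ) (hpos : ∀ k, 0 < Λ k)
    (hgap : ∃ c > 0, ∀ k, c ≤ Λ (k + 1) - Λ k)
    (hMuntz : Summable fun k => 1 / Λ k)
    (p : ℝ≥0∞) [Fact (1 ≤ p)]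
    (δ : ℝ) (hδ0 : 0 ≤ δ) (hδ1 : δ < 1) :
    ∃ T : ↥(muntzSpace (Set.range Λ) p 0 1) ≃L[ℝ] ↥(muntzSpace (Set.range Λ) p δ 1),
      ∀ f : ↥(muntzSpace (Set.range Λ) p 0 1),
        ((T f : Lp ℝ p (volume.restrict (Set.Icc δ 1))) : ℝ → ℝ)
          =ᵐ[volume.restrict (Set.Icc δ 1)]
        ((f : Lp ℝ p (volume.restrict (Set.Icc (0:ℝ) 1))) : ℝ → ℝ) := by
  have hsub : Set.Icc δ 1 ⊆ Set.Icc 0 1 := Set.Icc_subset_Icc_left hδ0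
  obtain ⟨R, hR⟩ := exists_continuousLinearMap_Lp_restrict (μ := volume) (p := p)
    measurableSet_Icc hsub
  obtain ⟨K, hK⟩ := exists_norm_le_mul_norm_restrict hpos hgap hMuntz hδ0 hδ1 hR
  have hequiv := exists_continuousLinearEquiv_topologicalClosure_map R _ hK
  rw [map_muntzPolynomials_restrict (Set.forall_mem_range.2 fun k => (hpos k).le) hsub hR,
    topologicalClosure_muntzPolynomials, topologicalClosure_muntzPolynomials] at hequiv
  obtain ⟨T, hT⟩ := hequiv
  exact ⟨T, fun f => hT f ▸ hR f⟩

/-- For `Λ` strictly increasing positive with gap and Müntz conditions and `1 ≤ p < ∞`,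
`M_{Λ,p}([0,1])` and `M_{Λ,p}([δ,1])` are linearly topologically isomorphic for each
`0 < δ < 1`, the isomorphism being induced by restriction to `[δ,1]`. -/
theorem muntzSpace_isomorphic_restrict
    (Λ : ℕ → ℝ) (hpos : ∀ k, 0 < Λ k) (hmono : StrictMono Λ)
    (hgap : ∃ c > 0, ∀ k, c ≤ Λ (k + 1) - Λ k)
    (hMuntz : Summable fun k => 1 / Λ k)
    (p : ℝ≥0∞) [Fact (1 ≤ p)] (hp' : p ≠ ∞)
    (δ : ℝ) (hδ0 : 0 < δ) (hδ1 : δ < 1) :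
    ∃ T : ↥(muntzSpace (Set.range Λ) p 0 1) ≃L[ℝ] ↥(muntzSpace (Set.range Λ) p δ 1),
      ∀ f : ↥(muntzSpace (Set.range Λ) p 0 1),
        ((T f : Lp ℝ p (volume.restrict (Set.Icc δ 1))) : ℝ → ℝ)
          =ᵐ[volume.restrict (Set.Icc δ 1)]
        ((f : Lp ℝ p (volume.restrict (Set.Icc (0:ℝ) 1))) : ℝ → ℝ) :=
  muntzSpace_isomorphic_restrict_general Λ hpos hgap hMuntz p δ hδ0.le hδ1
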